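/- Let P_i and P_j be real 3×4 matrices of rank 3 with distinct centers. Then the 3×3 matrix 𝓕(P_i, P_j) has rank exactly 2. -/

import Mathlib

open Matrix

/-- The fundamental matrix of a camera pair `(P, Q)` of `3 × 4` matrices:
its `(h,k)` entry is `(-1)^(h+k)` times the determinant of the `4 × 4` matrix
obtained by stacking the rows of `P` other than row `k` (in their original order)
on top of the rows of `Q` other than row `h` (in their original order). -/
def fund {K : Type*} [CommRing K] (P Q : Matrix (Fin 3) (Fin 4) K) :
    Matrix (Fin 3) (Fin 3) K :=
  Matrix.of fun h k =>
    (-1 : K) ^ ((h : ℕ) + (k : ℕ)) *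
      (Matrix.of fun r c : Fin 4 =>
          if hr : (r : ℕ) < 2 then P (k.succAbove ⟨(r : ℕ), hr⟩) c
          else Q (h.succAbove ⟨(r : ℕ) - 2, by have := r.isLt; omega⟩) c).det

/-- The vector of signed maximal minors of `P` (the center of the camera). -/
def ctr (P : Matrix (Fin 3) (Fin 4) ℝ) : Fin 4 → ℝ :=
  ![(P.submatrix id ![1, 2, 3]).det, -(P.submatrix id ![0, 2, 3]).det,
    (P.submatrix id ![0, 1, 3]).det, -(P.submatrix id ![0, 1, 2]).det]

/-- The matrix of the cross product with `e`. -/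
def crossMat (e : Fin 3 → ℝ) : Matrix (Fin 3) (Fin 3) ℝ :=
  !![0, -e 2, e 1; e 2, 0, -e 0; -e 1, e 0, 0]

lemma crossMat_mulVec (e v : Fin 3 → ℝ) : crossMat e *ᵥ v = crossProduct e v := by
  ext i
  fin_cases i <;>
    simp [crossMat, cross_apply, Matrix.mulVec, dotProduct, Fin.sum_univ_three] <;> ring

lemma mulVec_ctr (P : Matrix (Fin 3) (Fin 4) ℝ) : P *ᵥ ctr P = 0 := by
  ext i
  fin_cases i <;>
    simp [ctr, Matrix.mulVec, dotProduct, Fin.sum_univ_four, Matrix.det_fin_three] <;> ring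

set_option maxHeartbeats 4000000 in
lemma fund_mul (P Q : Matrix (Fin 3) (Fin 4) ℝ) :
    fund P Q * P = crossMat (Q *ᵥ ctr P) * Q := by
  ext i j
  fin_cases i <;> fin_cases j <;>
    simp [fund, ctr, crossMat, Matrix.mul_apply, Matrix.mulVec, dotProduct,
      Fin.sum_univ_four, Fin.sum_univ_three, Matrix.det_succ_row_zero, Fin.succAbove] <;> ring

lemma exists_right_inv (P : Matrix (Fin 3) (Fin 4) ℝ) (h : P.rank = 3) :
    ∃ R : Matrix (Fin 4) (Fin 3) ℝ, P * R = 1 := by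
  rw [← Matrix.mulVec_surjective_iff_exists_right_inverse]
  have : LinearMap.range P.mulVecLin = ⊤ := by
    apply Submodule.eq_top_of_finrank_eq
    simpa [Matrix.rank] using h
  exact LinearMap.range_eq_top.1 this

lemma ctr_ne_zero (P : Matrix (Fin 3) (Fin 4) ℝ) (h : P.rank = 3) : ctr P ≠ 0 := by
  obtain ⟨R, hR⟩ := exists_right_inv P h
  intro h0
  have key : (P * R).det = ctr P 0 * (R.submatrix ![1, 2, 3] id).det
      - ctr P 1 * (R.submatrix ![0, 2, 3] id).det
      + ctr P 2 * (R.submatrix ![0, 1, 3] id).det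
      - ctr P 3 * (R.submatrix ![0, 1, 2] id).det := by
    simp only [Matrix.det_fin_three]
    simp [ctr, Matrix.mul_apply, Fin.sum_univ_four, Matrix.det_fin_three]
    ring
  rw [hR, h0] at key
  simp at key

lemma finrank_ker (P : Matrix (Fin 3) (Fin 4) ℝ) (h : P.rank = 3) :
    Module.finrank ℝ (LinearMap.ker P.mulVecLin) = 1 := by
  have := LinearMap.finrank_range_add_finrank_ker P.mulVecLin
  simp only [Module.finrank_fin_fun] at this
  have h' : Module.finrank ℝ (LinearMap.range P.mulVecLin) = 3 := h
  omega

lemma crossMat_rank (e : Fin 3 → ℝ) (he : e ≠ 0) : (crossMat e).rank = 2 := by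
  have hk : LinearMap.ker (crossMat e).mulVecLin = ℝ ∙ e := by
    ext v
    rw [LinearMap.mem_ker, Matrix.mulVecLin_apply, crossMat_mulVec,
      Submodule.mem_span_singleton]
    constructor
    · intro hv
      have := mt crossProduct_ne_zero_iff_linearIndependent.2 (not_not.2 hv)
      rw [LinearIndependent.pair_iff' he] at this
      push Not at this
      exact this
    · rintro ⟨a, rfl⟩
      simp
  have := LinearMap.finrank_range_add_finrank_ker (crossMat e).mulVecLin
  rw [hk, finrank_span_singleton he] at this
  simp only [Module.finrank_fin_fun] at this
  have h' : (crossMat e).rank = Module.finrank ℝ (LinearMap.range (crossMat e).mulVecLin) := rfl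
  omega

/-- for cameras (rank-3 matrices) `Pi`, `Pj` with distinct centers,
the fundamental matrix has rank exactly 2. -/
theorem fund_rank_eq_two (Pi Pj : Matrix (Fin 3) (Fin 4) ℝ)
    (hi : Pi.rank = 3) (hj : Pj.rank = 3)
    (hc : LinearMap.ker Pi.mulVecLin ≠ LinearMap.ker Pj.mulVecLin) :
    (fund Pi Pj).rank = 2 := by
  have he : Pj *ᵥ ctr Pi ≠ 0 := by
    intro h0
    apply hc
    have hspan : ∀ P : Matrix (Fin 3) (Fin 4) ℝ, P.rank = 3 → P *ᵥ ctr Pi = 0 →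
        (ℝ ∙ ctr Pi) = LinearMap.ker P.mulVecLin := by
      intro P hP h
      apply Submodule.eq_of_le_of_finrank_eq
      · rw [Submodule.span_singleton_le_iff_mem]
        simpa using h
      · rw [finrank_span_singleton (ctr_ne_zero Pi hi), finrank_ker P hP]
    rw [← hspan Pi hi (mulVec_ctr Pi), ← hspan Pj hj h0]
  obtain ⟨R, hR⟩ := exists_right_inv Pi hi
  obtain ⟨R', hR'⟩ := exists_right_inv Pj hj
  have hm := fund_mul Pi Pj
  have h1 : fund Pi Pj = crossMat (Pj *ᵥ ctr Pi) * (Pj * R) := by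
    rw [← Matrix.mul_assoc, ← hm, Matrix.mul_assoc, hR, Matrix.mul_one]
  have h2 : crossMat (Pj *ᵥ ctr Pi) = fund Pi Pj * (Pi * R') := by
    rw [← Matrix.mul_assoc, hm, Matrix.mul_assoc, hR', Matrix.mul_one]
  rw [← crossMat_rank _ he]
  apply le_antisymm
  · rw [h1]
    exact Matrix.rank_mul_le_left _ _
  · rw [h2]
    exact Matrix.rank_mul_le_left _ _
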